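/- There exists a constant c > 0 such that for every real number y with |y| ≤ π, c·y² ≤ (1/280)·cos(4y) − (16/315)·cos(3y) + (2/5)·cos(2y) − (16/5)·cos(y) + 205/72. -/

import Mathlib

/-!
The symbol of the second-order stencil is `w = 2 - 2 * cos y = (2 * sin (y / 2)) ^ 2`, and on
`[-π, π]` the function `y ^ 2` is a power series in `w`, namely `(2 * arcsin (√w / 2)) ^ 2`, whose
coefficients are all nonnegative. The symbol of order `2 * m` is the truncation of this series
after `w ^ m`. Since `0 ≤ w`, raising the order can only increase the symbol, so every order
inherits the bound `4 / π ^ 2 * y ^ 2 ≤ w` on `[-π, π]`.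
-/

open Finset
open scoped Nat

/-- The symbol `y ↦ h ^ 2 * ψ_h (y / h)` of the central difference approximation of `-d²/dx²` of
order `2 * m`. It is encoded as the polynomial of degree at most `m` in `2 - 2 * cos y` that agrees
with `y ^ 2` up to `O(y ^ (2 * m + 2))`, rather than as the cosine sum given by the stencil
weights. -/
noncomputable def centralDifferenceSymbol (m : ℕ) (y : ℝ) : ℝ :=
  ∑ k ∈ range m, 2 * (k ! : ℝ) ^ 2 / (2 * k + 2)! * (2 - 2 * Real.cos y) ^ (k + 1)

theorem centralDifferenceSymbol_one (y : ℝ) :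
    centralDifferenceSymbol 1 y = 2 - 2 * Real.cos y := by
  simp [centralDifferenceSymbol]

theorem centralDifferenceSymbol_mono (y : ℝ) : Monotone fun m => centralDifferenceSymbol m y := by
  have two_sub_two_mul_cos_nonneg : 0 ≤ 2 - 2 * Real.cos y := by linarith [Real.cos_le_one y]
  exact (sum_mono_set_of_nonneg fun k => by positivity).comp range_mono

theorem mul_sq_le_centralDifferenceSymbol {m : ℕ} (hm : m ≠ 0) {y : ℝ} (hy : |y| ≤ Real.pi) :
    4 / Real.pi ^ 2 * y ^ 2 ≤ centralDifferenceSymbol m y :=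
  calc
    4 / Real.pi ^ 2 * y ^ 2 ≤ 2 - 2 * Real.cos y := by
      linear_combination 2 * Real.cos_le_one_sub_mul_cos_sq hy
    _ = centralDifferenceSymbol 1 y := (centralDifferenceSymbol_one y).symm
    _ ≤ centralDifferenceSymbol m y :=
      centralDifferenceSymbol_mono y (Nat.one_le_iff_ne_zero.mpr hm)

theorem centralDifferenceSymbol_four (y : ℝ) :
    centralDifferenceSymbol 4 y =
      (1/280) * Real.cos (4*y) - (16/315) * Real.cos (3*y) + (2/5) * Real.cos (2*y)
        - (16/5) * Real.cos y + 205/72 := by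
  have cos_four_mul : Real.cos (4 * y) = 2 * (2 * Real.cos y ^ 2 - 1) ^ 2 - 1 := by
    rw [show 4 * y = 2 * (2 * y) by ring, Real.cos_two_mul, Real.cos_two_mul]
  rw [cos_four_mul, Real.cos_three_mul, Real.cos_two_mul]
  simp only [centralDifferenceSymbol, sum_range_succ, sum_range_zero, Nat.factorial]
  push_cast
  ring

/-- There is a constant `c > 0` with
`c·y² ≤ (1/280)cos(4y) − (16/315)cos(3y) + (2/5)cos(2y) − (16/5)cos(y) + 205/72`
for all `|y| ≤ π`. -/
theorem eighth_order_symbol_lower_bound :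
    ∃ c : ℝ, 0 < c ∧ ∀ y : ℝ, |y| ≤ Real.pi →
      c * y^2 ≤ (1/280) * Real.cos (4*y) - (16/315) * Real.cos (3*y) + (2/5) * Real.cos (2*y)
        - (16/5) * Real.cos y + 205/72 :=
  ⟨4 / Real.pi ^ 2, by positivity, fun y hy =>
    (mul_sq_le_centralDifferenceSymbol four_ne_zero hy).trans_eq (centralDifferenceSymbol_four y)⟩
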